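/- arXiv:1506.05681 — 2 statements merged into one kernel-verified Lean document; each statement's English description precedes it below -/
import Mathlib

section
/- Let F be a field of characteristic zero and let k₁, k₂, k₃ be natural numbers with k₁+k₂+k₃ even and balanced (i.e. k₁ ≤ k₂+k₃, k₂ ≤ k₁+k₃, k₃ ≤ k₁+k₂). Then the F-subspace of P_{(k₁,k₂,k₃)} consisting of polynomials P satisfying P(W₁g, W₂g, W₃g) = P(W₁, W₂, W₃) for every g ∈ SL₂(F) is one-dimensional, spanned by Δ_{(k₁,k₂,k₃)}. (Equivalently, the space of SL₂(F)-equivariant linear forms on the tensor product V_{k₁} ⊗ V_{k₂} ⊗ V_{k₃} of the duals V_{k_i} of P_{k_i} is one-dimensional.) -/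
open MvPolynomial

/-- The substitution action of a `2 × 2` matrix `g` on polynomials in the three pairs of
variables `Wᵢ = (Xᵢ, Yᵢ)` (indexed by `Fin 3 × Fin 2`), given by `Wᵢ ↦ Wᵢ g`, i.e.
`(Xᵢ, Yᵢ) ↦ (a Xᵢ + c Yᵢ, b Xᵢ + d Yᵢ)` for `g = [[a,b],[c,d]]`. -/
noncomputable def matSubst (F : Type*) [Field F] (g : Matrix (Fin 2) (Fin 2) F) :
    MvPolynomial (Fin 3 × Fin 2) F →ₐ[F] MvPolynomial (Fin 3 × Fin 2) F :=
  aeval fun v : Fin 3 × Fin 2 =>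
    C (g 0 v.2) * X (v.1, (0 : Fin 2)) + C (g 1 v.2) * X (v.1, (1 : Fin 2))

/-- `δ(Wᵢ, Wⱼ) = Xᵢ Yⱼ - Yᵢ Xⱼ`. -/
noncomputable def deltaPoly (F : Type*) [Field F] (i j : Fin 3) :
    MvPolynomial (Fin 3 × Fin 2) F :=
  X (i, (0 : Fin 2)) * X (j, (1 : Fin 2)) - X (i, (1 : Fin 2)) * X (j, (0 : Fin 2))

/-- `Δ_{(k₁,k₂,k₃)} = δ(W₂,W₃)^{k₁*} δ(W₁,W₃)^{k₂*} δ(W₁,W₂)^{k₃*}` where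
`k₁* = (-k₁+k₂+k₃)/2`, `k₂* = (k₁-k₂+k₃)/2`, `k₃* = (k₁+k₂-k₃)/2`. -/
noncomputable def DeltaPoly (F : Type*) [Field F] (k₁ k₂ k₃ : ℕ) :
    MvPolynomial (Fin 3 × Fin 2) F :=
  deltaPoly F 1 2 ^ ((k₂ + k₃ - k₁) / 2) * deltaPoly F 0 2 ^ ((k₁ + k₃ - k₂) / 2) *
    deltaPoly F 0 1 ^ ((k₁ + k₂ - k₃) / 2)

/-- `P` is homogeneous of degree `k i` in the `i`-th pair of variables, for each `i`;
i.e. `P ∈ P_{(k 0, k 1, k 2)}`. -/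
def IsTriHomogeneous {F : Type*} [Field F] (P : MvPolynomial (Fin 3 × Fin 2) F)
    (k : Fin 3 → ℕ) : Prop :=
  ∀ m ∈ P.support, ∀ i : Fin 3, m (i, (0 : Fin 2)) + m (i, (1 : Fin 2)) = k i

/-!
Let `P` be an invariant of tridegree `(k₁, k₂, k₃)` with `k₁ + k₂ + k₃ = 2m`. Invariance under
`diag(t, t⁻¹)` forces every monomial of `P` to have degree `m` in the `Xᵢ` and degree `m` in the
`Yᵢ`. Since every square matrix is a product of a diagonal matrix and transvections, it follows
that `P(Wg) = det(g)ᵐ P(W)` for *every* `2 × 2` matrix `g`. Cramer's rule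
`δ₁₂ W₃ = -δ₂₃ W₁ + δ₁₃ W₂` says that the rows `-δ₂₃ W₁`, `δ₁₃ W₂`, `δ₁₂ W₃` are the
configuration `e₁`, `e₂`, `e₁ + e₂` multiplied by a matrix of determinant `-δ₂₃ δ₁₃ δ₁₂`. Hence
`(-δ₂₃)^k₁ δ₁₃^k₂ δ₁₂^k₃ P = (-δ₂₃ δ₁₃ δ₁₂)ᵐ P(e₁, e₂, e₁ + e₂)`, and cancelling common factors
exhibits `P` as a multiple of `Δ`.
-/

section Evaluation

variable {σ m n R : Type*} [CommSemiring R]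

lemma coeff_aeval_C_mul_X (c : σ → R) (P : MvPolynomial σ R) (d : σ →₀ ℕ) :
    coeff d (aeval (fun v => C (c v) * X v) P) = (d.prod fun v e => c v ^ e) * coeff d P := by
  classical
  induction P using MvPolynomial.induction_on' with
  | monomial u a =>
    have aeval_monomial_eq : aeval (fun v => C (c v) * X v) (monomial u a) =
        monomial u (a * u.prod fun v e => c v ^ e) := by
      simp only [aeval_monomial, mul_pow, Finsupp.prod_mul, ← map_pow, ← map_finsuppProd,
        algebraMap_eq, ← mul_assoc, ← C_mul]
      exact monomial_eq.symm
    rw [aeval_monomial_eq, coeff_monomial, coeff_monomial]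
    split_ifs with h
    · rw [h, mul_comm]
    · rw [mul_zero]
  | add P Q hP hQ => rw [map_add, coeff_add, coeff_add, hP, hQ, mul_add]

lemma eval_mul_of_forall_mem_support {P : MvPolynomial σ R} {t : σ → R} {a : R}
    (h : ∀ d ∈ P.support, (d.prod fun v e => t v ^ e) = a) (x : σ → R) :
    eval (fun v => t v * x v) P = a * eval x P := by
  rw [eval_eq, eval_eq, Finset.mul_sum]
  refine Finset.sum_congr rfl fun d hd => ?_
  simp only [mul_pow, Finset.prod_mul_distrib, ← h d hd, Finsupp.prod]
  ring

/-- The value at the matrix `A` of a polynomial in the entries of a matrix. A triple of vectors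
`W₁, W₂, W₃` is encoded as the `3 × 2` matrix with these rows, so that the substitution
`Wᵢ ↦ Wᵢ g` becomes `A ↦ A * g`. -/
noncomputable def evalMatrix (A : Matrix m n R) : MvPolynomial (m × n) R →+* R :=
  eval fun v => A v.1 v.2

lemma eq_of_forall_evalMatrix_eq {S : Type*} [CommRing S] [IsDomain S] [Infinite S]
    {P Q : MvPolynomial (m × n) S} (h : ∀ A : Matrix m n S, evalMatrix A P = evalMatrix A Q) :
    P = Q :=
  MvPolynomial.funext fun x => h (Matrix.of fun i j => x (i, j))

lemma evalMatrix_mul_diagonal [Fintype m] [Fintype n] [DecidableEq n]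
    {P : MvPolynomial (m × n) R} {l : n → ℕ}
    (hP : ∀ d ∈ P.support, ∀ j, ∑ i, d (i, j) = l j) (A : Matrix m n R) (s : n → R) :
    evalMatrix (A * Matrix.diagonal s) P = (∏ j, s j ^ l j) * evalMatrix A P := by
  have prod_pow_eq (d) (hd : d ∈ P.support) : (d.prod fun v e => s v.2 ^ e) = ∏ j, s j ^ l j := by
    rw [Finsupp.prod_fintype _ _ (by simp), Fintype.prod_prod_type_right]
    simp only [Finset.prod_pow_eq_pow_sum, hP d hd]
  simp only [evalMatrix, Matrix.mul_diagonal, mul_comm (A _ _)]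
  exact eval_mul_of_forall_mem_support prod_pow_eq fun v => A v.1 v.2

lemma evalMatrix_diagonal_mul [Fintype m] [Fintype n] [DecidableEq m]
    {P : MvPolynomial (m × n) R} {k : m → ℕ}
    (hP : ∀ d ∈ P.support, ∀ i, ∑ j, d (i, j) = k i) (t : m → R) (A : Matrix m n R) :
    evalMatrix (Matrix.diagonal t * A) P = (∏ i, t i ^ k i) * evalMatrix A P := by
  have prod_pow_eq (d) (hd : d ∈ P.support) : (d.prod fun v e => t v.1 ^ e) = ∏ i, t i ^ k i := by
    rw [Finsupp.prod_fintype _ _ (by simp), Fintype.prod_prod_type]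
    simp only [Finset.prod_pow_eq_pow_sum, hP d hd]
  simp only [evalMatrix, Matrix.diagonal_mul]
  exact eval_mul_of_forall_mem_support prod_pow_eq fun v => A v.1 v.2

end Evaluation

lemma eq_of_forall_ne_zero_pow_eq {R : Type*} [CommRing R] [IsDomain R] [Infinite R] {a b : ℕ}
    (h : ∀ t : R, t ≠ 0 → t ^ a = t ^ b) : a = b := by
  have X_pow_eq : (Polynomial.X ^ a : Polynomial R) = Polynomial.X ^ b := by
    refine Polynomial.eq_of_infinite_eval_eq _ _ ((Set.finite_singleton 0).infinite_compl.mono ?_)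
    intro t ht
    simpa using h t ht
  simpa using congrArg Polynomial.natDegree X_pow_eq

section Invariants

variable {F : Type*} [Field F] {P : MvPolynomial (Fin 3 × Fin 2) F}

/-- Invariance under the substitutions `Wᵢ ↦ Wᵢ g` for all `g ∈ SL₂(F)`; the elements of `SL₂(F)`
are encoded as matrices of determinant one, as in the definition of `matSubst`. -/
def IsSL2Invariant (P : MvPolynomial (Fin 3 × Fin 2) F) : Prop :=
  ∀ g : Matrix (Fin 2) (Fin 2) F, g.det = 1 → matSubst F g P = P

lemma evalMatrix_matSubst (A : Matrix (Fin 3) (Fin 2) F) (g : Matrix (Fin 2) (Fin 2) F)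
    (P : MvPolynomial (Fin 3 × Fin 2) F) :
    evalMatrix A (matSubst F g P) = evalMatrix (A * g) P := by
  suffices (evalMatrix A).comp (matSubst F g : _ →+* _) = evalMatrix (A * g) from
    congrArg (· P) this
  refine ringHom_ext (fun c => ?_) fun v => ?_
  · simp [evalMatrix]
  · simp [evalMatrix, matSubst, Matrix.mul_apply, mul_comm]

lemma coeff_matSubst_diagonal (s : Fin 2 → F) (P : MvPolynomial (Fin 3 × Fin 2) F)
    (d : Fin 3 × Fin 2 →₀ ℕ) :
    coeff d (matSubst F (Matrix.diagonal s) P) = (∏ j, s j ^ ∑ i, d (i, j)) * coeff d P := by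
  have matSubst_diagonal : matSubst F (Matrix.diagonal s) = aeval fun v => C (s v.2) * X v := by
    refine algHom_ext fun ⟨i, j⟩ => ?_
    fin_cases j <;> simp [matSubst]
  rw [matSubst_diagonal, coeff_aeval_C_mul_X, Finsupp.prod_fintype _ _ fun _ => pow_zero _,
    Fintype.prod_prod_type_right]
  simp only [Finset.prod_pow_eq_pow_sum]

lemma IsTriHomogeneous.sum_row {k : Fin 3 → ℕ} (hP : IsTriHomogeneous P k)
    {d : Fin 3 × Fin 2 →₀ ℕ} (hd : d ∈ P.support) (i : Fin 3) : ∑ j, d (i, j) = k i := by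
  rw [Fin.sum_univ_two, hP d hd i]

lemma IsTriHomogeneous.smul {k : Fin 3 → ℕ} (hP : IsTriHomogeneous P k) (c : F) :
    IsTriHomogeneous (c • P) k :=
  fun d hd => hP d (support_smul hd)

lemma IsSL2Invariant.smul (hP : IsSL2Invariant P) (c : F) : IsSL2Invariant (c • P) :=
  fun g hg => by rw [map_smul, hP g hg]

lemma IsSL2Invariant.sum_col_zero_eq_sum_col_one [Infinite F] (hP : IsSL2Invariant P)
    {d : Fin 3 × Fin 2 →₀ ℕ} (hd : d ∈ P.support) : ∑ i, d (i, 0) = ∑ i, d (i, 1) := by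
  refine eq_of_forall_ne_zero_pow_eq fun (t : F) ht => ?_
  have coeff_eq := congrArg (coeff d) (hP (Matrix.diagonal ![t, t⁻¹]) (by simp [ht]))
  rw [coeff_matSubst_diagonal, mul_eq_right₀ (mem_support_iff.1 hd), Fin.prod_univ_two] at coeff_eq
  simpa [inv_pow, mul_inv_eq_one₀ (pow_ne_zero _ ht)] using coeff_eq

lemma IsSL2Invariant.sum_col [Infinite F] (hP : IsSL2Invariant P) {k : Fin 3 → ℕ}
    (hk : IsTriHomogeneous P k) {m : ℕ} (hm : ∑ i, k i = 2 * m)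
    {d : Fin 3 × Fin 2 →₀ ℕ} (hd : d ∈ P.support) (j : Fin 2) : ∑ i, d (i, j) = m := by
  have cols_eq := hP.sum_col_zero_eq_sum_col_one hd
  have cols_add : ∑ i, d (i, 0) + ∑ i, d (i, 1) = 2 * m := by
    rw [← hm, ← Finset.sum_add_distrib]
    exact Finset.sum_congr rfl fun i _ => hk d hd i
  fin_cases j <;> dsimp only [Fin.zero_eta, Fin.mk_one] <;> lia

lemma IsSL2Invariant.evalMatrix_mul [Infinite F] (hP : IsSL2Invariant P) {k : Fin 3 → ℕ}
    (hk : IsTriHomogeneous P k) {m : ℕ} (hm : ∑ i, k i = 2 * m)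
    (A : Matrix (Fin 3) (Fin 2) F) (g : Matrix (Fin 2) (Fin 2) F) :
    evalMatrix (A * g) P = g.det ^ m * evalMatrix A P := by
  induction g using Matrix.diagonal_transvection_induction generalizing A with
  | hdiag s _ =>
    rw [evalMatrix_mul_diagonal (fun _ hd => hP.sum_col hk hm hd), Matrix.det_diagonal,
      Finset.prod_pow]
  | htransvec t =>
    rw [← evalMatrix_matSubst, hP _ t.det, t.det, one_pow, one_mul]
  | hmul g h hg hh =>
    rw [← Matrix.mul_assoc, hh, hg, Matrix.det_mul]
    ring

end Invariants

section Delta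

variable {F : Type*} [Field F]

@[simp]
lemma evalMatrix_deltaPoly (A : Matrix (Fin 3) (Fin 2) F) (i j : Fin 3) :
    evalMatrix A (deltaPoly F i j) = A i 0 * A j 1 - A i 1 * A j 0 := by
  simp [evalMatrix, deltaPoly]

lemma deltaPoly_ne_zero {i j : Fin 3} (hij : i ≠ j) : deltaPoly F i j ≠ 0 := by
  intro h
  have eval_eq_zero := congrArg (evalMatrix (Matrix.single i 0 1 + Matrix.single j 1 1)) h
  rw [evalMatrix_deltaPoly] at eval_eq_zero
  simp only [Matrix.add_apply] at eval_eq_zero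
  simp [hij, hij.symm] at eval_eq_zero

lemma DeltaPoly_ne_zero (k₁ k₂ k₃ : ℕ) : DeltaPoly F k₁ k₂ k₃ ≠ 0 := by
  have delta_pow_ne_zero {i j : Fin 3} (hij : i ≠ j) (e : ℕ) : deltaPoly F i j ^ e ≠ 0 :=
    pow_ne_zero e (deltaPoly_ne_zero hij)
  exact mul_ne_zero (mul_ne_zero (delta_pow_ne_zero (by decide) _)
    (delta_pow_ne_zero (by decide) _)) (delta_pow_ne_zero (by decide) _)

lemma DeltaPoly_eq_pow_mul_pow_mul_pow (p q r : ℕ) :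
    DeltaPoly F (q + r) (p + r) (p + q) =
      deltaPoly F 1 2 ^ p * deltaPoly F 0 2 ^ q * deltaPoly F 0 1 ^ r := by
  unfold DeltaPoly
  congr <;> lia

lemma matSubst_deltaPoly (g : Matrix (Fin 2) (Fin 2) F) (i j : Fin 3) :
    matSubst F g (deltaPoly F i j) = C g.det * deltaPoly F i j := by
  simp only [matSubst, deltaPoly, map_sub, map_mul, aeval_X, Matrix.det_fin_two]
  ring

lemma isSL2Invariant_DeltaPoly (k₁ k₂ k₃ : ℕ) : IsSL2Invariant (DeltaPoly F k₁ k₂ k₃) := by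
  intro g hg
  simp only [DeltaPoly, map_mul, map_pow, matSubst_deltaPoly, hg, C_1, one_mul]

/-- The tridegree of a variable: both variables of the `i`-th pair have weight the `i`-th unit
vector of `ℕ³`, so that homogeneity in each pair of variables is weighted homogeneity. -/
def triWeight (v : Fin 3 × Fin 2) : Fin 3 → ℕ :=
  Pi.single v.1 1

lemma isTriHomogeneous_iff_isWeightedHomogeneous {P : MvPolynomial (Fin 3 × Fin 2) F}
    {k : Fin 3 → ℕ} :
    IsTriHomogeneous P k ↔ IsWeightedHomogeneous triWeight P k := by
  have weight_apply (d : Fin 3 × Fin 2 →₀ ℕ) (i : Fin 3) :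
      Finsupp.weight triWeight d i = d (i, 0) + d (i, 1) := by
    rw [Finsupp.weight_apply, Finsupp.sum_fintype _ _ (by simp)]
    simp [triWeight, Fintype.sum_prod_type, Pi.single_apply, Finset.sum_add_distrib]
  simp only [IsTriHomogeneous, IsWeightedHomogeneous, mem_support_iff, ne_eq,
    _root_.funext_iff, weight_apply]

lemma isWeightedHomogeneous_deltaPoly (i j : Fin 3) :
    IsWeightedHomogeneous triWeight (deltaPoly F i j) (Pi.single i 1 + Pi.single j 1) :=
  (weightedHomogeneousSubmodule F _ _).sub_mem
    ((isWeightedHomogeneous_X F _ (i, 0)).mul (isWeightedHomogeneous_X F _ (j, 1)))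
    ((isWeightedHomogeneous_X F _ (i, 1)).mul (isWeightedHomogeneous_X F _ (j, 0)))

lemma isTriHomogeneous_DeltaPoly (p q r : ℕ) :
    IsTriHomogeneous (DeltaPoly F (q + r) (p + r) (p + q)) ![q + r, p + r, p + q] := by
  rw [isTriHomogeneous_iff_isWeightedHomogeneous, DeltaPoly_eq_pow_mul_pow_mul_pow]
  convert (((isWeightedHomogeneous_deltaPoly 1 2).pow p).mul
    ((isWeightedHomogeneous_deltaPoly 0 2).pow q)).mul
    ((isWeightedHomogeneous_deltaPoly 0 1).pow r) using 1
  funext i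
  fin_cases i <;> simp

end Delta

section Uniqueness

variable {F : Type*} [Field F]

/-- The configuration `e₁, e₂, e₁ + e₂`, a base point for the action of `GL₂` and of rescalings
of the three vectors on triples of pairwise independent vectors. -/
def standardTriple (F : Type*) [Field F] : Matrix (Fin 3) (Fin 2) F :=
  !![1, 0; 0, 1; 1, 1]

lemma exists_diagonal_mul_eq_standardTriple_mul (A : Matrix (Fin 3) (Fin 2) F) :
    ∃ g : Matrix (Fin 2) (Fin 2) F,
      Matrix.diagonal ![-evalMatrix A (deltaPoly F 1 2), evalMatrix A (deltaPoly F 0 2),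
        evalMatrix A (deltaPoly F 0 1)] * A = standardTriple F * g ∧
      g.det = -evalMatrix A (deltaPoly F 1 2) * evalMatrix A (deltaPoly F 0 2) *
        evalMatrix A (deltaPoly F 0 1) := by
  refine ⟨Matrix.of ![-evalMatrix A (deltaPoly F 1 2) • A 0,
    evalMatrix A (deltaPoly F 0 2) • A 1], ?_, ?_⟩
  · ext i j
    rw [Matrix.diagonal_mul, Matrix.mul_apply, Fin.sum_univ_two]
    fin_cases i <;> fin_cases j <;> simp [standardTriple] <;> ring
  · simp [Matrix.det_fin_two]
    ring

variable [Infinite F] {P : MvPolynomial (Fin 3 × Fin 2) F}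

lemma IsSL2Invariant.deltaPoly_pow_mul_eq (hP : IsSL2Invariant P) {k : Fin 3 → ℕ}
    (hk : IsTriHomogeneous P k) {m : ℕ} (hm : ∑ i, k i = 2 * m) :
    (-deltaPoly F 1 2) ^ k 0 * deltaPoly F 0 2 ^ k 1 * deltaPoly F 0 1 ^ k 2 * P =
      (-deltaPoly F 1 2 * deltaPoly F 0 2 * deltaPoly F 0 1) ^ m *
        C (evalMatrix (standardTriple F) P) := by
  refine eq_of_forall_evalMatrix_eq fun A => ?_
  obtain ⟨g, smul_rows_eq, det_eq⟩ := exists_diagonal_mul_eq_standardTriple_mul A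
  have eval_eq := congrArg (evalMatrix · P) smul_rows_eq
  simp only [evalMatrix_diagonal_mul (fun _ hd => hk.sum_row hd), hP.evalMatrix_mul hk hm, det_eq,
    Fin.prod_univ_three, Matrix.cons_val] at eval_eq
  have evalMatrix_C (c : F) : evalMatrix A (C c) = c := eval_C c
  simpa only [map_mul, map_pow, map_neg, evalMatrix_C] using eval_eq

lemma IsSL2Invariant.eq_smul_DeltaPoly (hP : IsSL2Invariant P) {p q r : ℕ}
    (hk : IsTriHomogeneous P ![q + r, p + r, p + q]) :
    P = ((-1) ^ p * evalMatrix (standardTriple F) P) • DeltaPoly F (q + r) (p + r) (p + q) := by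
  have hm : ∑ i, ![q + r, p + r, p + q] i = 2 * (p + q + r) := by
    simp only [Fin.sum_univ_three, Matrix.cons_val]
    ring
  have factor_ne_zero : (-deltaPoly F 1 2) ^ (q + r) * deltaPoly F 0 2 ^ (p + r) *
      deltaPoly F 0 1 ^ (p + q) ≠ 0 :=
    mul_ne_zero (mul_ne_zero
      (pow_ne_zero _ (neg_ne_zero.2 (deltaPoly_ne_zero (by decide))))
      (pow_ne_zero _ (deltaPoly_ne_zero (by decide))))
      (pow_ne_zero _ (deltaPoly_ne_zero (by decide)))
  refine mul_left_cancel₀ factor_ne_zero ((hP.deltaPoly_pow_mul_eq hk hm).trans ?_)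
  rw [DeltaPoly_eq_pow_mul_pow_mul_pow, smul_eq_C_mul, C_mul, C_pow, C_neg, C_1, mul_pow, mul_pow,
    pow_add _ (p + q), pow_add _ p, neg_pow _ p]
  ring

end Uniqueness

theorem sl2_invariants_one_dimensional_general (F : Type*) [Field F] [Infinite F] (k₁ k₂ k₃ : ℕ)
    (heven : Even (k₁ + k₂ + k₃)) (h1 : k₁ ≤ k₂ + k₃) (h2 : k₂ ≤ k₁ + k₃)
    (h3 : k₃ ≤ k₁ + k₂) :
    DeltaPoly F k₁ k₂ k₃ ≠ 0 ∧
    ∀ P : MvPolynomial (Fin 3 × Fin 2) F,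
      (IsTriHomogeneous P ![k₁, k₂, k₃] ∧
        ∀ g : Matrix (Fin 2) (Fin 2) F, g.det = 1 → matSubst F g P = P) ↔
      ∃ c : F, P = c • DeltaPoly F k₁ k₂ k₃ := by
  refine ⟨DeltaPoly_ne_zero k₁ k₂ k₃, fun P => ?_⟩
  obtain ⟨p, q, r, rfl, rfl, rfl⟩ : ∃ p q r : ℕ, k₁ = q + r ∧ k₂ = p + r ∧ k₃ = p + q := by
    obtain ⟨m, hm⟩ := heven
    exact ⟨m - k₁, m - k₂, m - k₃, by lia, by lia, by lia⟩
  constructor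
  · rintro ⟨hk, hP⟩
    exact ⟨_, IsSL2Invariant.eq_smul_DeltaPoly hP hk⟩
  · rintro ⟨c, rfl⟩
    exact ⟨(isTriHomogeneous_DeltaPoly p q r).smul c, (isSL2Invariant_DeltaPoly _ _ _).smul c⟩

/-- For a field `F` of characteristic zero and a balanced triple `(k₁,k₂,k₃)` with even sum,
the subspace of `P_{(k₁,k₂,k₃)}` of polynomials invariant under the substitutions
`Wᵢ ↦ Wᵢ g` for all `g ∈ SL₂(F)` is one-dimensional, spanned by `Δ_{(k₁,k₂,k₃)}`:
a polynomial lies in this subspace iff it is a scalar multiple of `Δ_{(k₁,k₂,k₃)}`,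
and `Δ_{(k₁,k₂,k₃)} ≠ 0`. -/
theorem sl2_invariants_one_dimensional (F : Type*) [Field F] [CharZero F] (k₁ k₂ k₃ : ℕ)
    (heven : Even (k₁ + k₂ + k₃)) (h1 : k₁ ≤ k₂ + k₃) (h2 : k₂ ≤ k₁ + k₃)
    (h3 : k₃ ≤ k₁ + k₂) :
    DeltaPoly F k₁ k₂ k₃ ≠ 0 ∧
    ∀ P : MvPolynomial (Fin 3 × Fin 2) F,
      (IsTriHomogeneous P ![k₁, k₂, k₃] ∧
        ∀ g : Matrix (Fin 2) (Fin 2) F, g.det = 1 → matSubst F g P = P) ↔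
      ∃ c : F, P = c • DeltaPoly F k₁ k₂ k₃ :=
  sl2_invariants_one_dimensional_general F k₁ k₂ k₃ heven h1 h2 h3
end

section
/- Let F be a field of characteristic zero and k ∈ ℕ. The bilinear form ⟨·,·⟩_k on the dual space V_k of P_k defined by ⟨l₁, l₂⟩_k := Σ_{i=0}^{k} (−1)^{k−i} · C(k,i) · l₁(X^i Y^{k−i}) · l₂(X^{k−i} Y^i) (i.e. the evaluation of l₁ ⊗ l₂ on the expansion of δ^k = (X₁Y₂ − Y₁X₂)^k, regarded as an element of P_k ⊗ P_k) is a perfect (nondegenerate) pairing on V_k. -/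
open MvPolynomial

/-- The monomial `X^i Y^(k-i)`, as an element of the space `P_k` of homogeneous polynomials of
degree `k` in two variables. -/
noncomputable def monBasisElt (F : Type*) [Field F] (k : ℕ) (i : Fin (k + 1)) :
    homogeneousSubmodule (Fin 2) F k :=
  ⟨X 0 ^ (i : ℕ) * X 1 ^ (k - (i : ℕ)), by
    rw [mem_homogeneousSubmodule]
    have h := (isHomogeneous_X_pow (R := F) (0 : Fin 2) (i : ℕ)).mul
      (isHomogeneous_X_pow (R := F) (1 : Fin 2) (k - (i : ℕ)))
    have hik : (i : ℕ) + (k - (i : ℕ)) = k := by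
      have := i.isLt
      omega
    rwa [hik] at h⟩

/-- The pairing `⟨l₁, l₂⟩ₖ = Σᵢ (-1)^(k-i) C(k,i) l₁(X^i Y^(k-i)) l₂(X^(k-i) Y^i)` on the dual
`V_k` of `P_k`, i.e. the evaluation of `l₁ ⊗ l₂` on the expansion of `δ^k = (X₁Y₂ - Y₁X₂)^k`
regarded as an element of `P_k ⊗ P_k`. -/
noncomputable def deltaPairing (F : Type*) [Field F] (k : ℕ)
    (l₁ l₂ : Module.Dual F (homogeneousSubmodule (Fin 2) F k)) : F :=
  ∑ i : Fin (k + 1),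
    (-1 : F) ^ (k - (i : ℕ)) * (k.choose (i : ℕ)) *
      (l₁ (monBasisElt F k i) * l₂ (monBasisElt F k ⟨k - (i : ℕ), by omega⟩))

/-!
In the basis of `V_k` dual to the monomials `X^i Y^(k-i)`, the Gram matrix of the pairing is
supported on the antidiagonal, with entries `± C(k,i)`. Each row and each column thus has exactly
one nonzero entry as soon as no `C(k,i)` vanishes in `F`.
-/

section WeightedDualPairing

open Module

variable {ι R M N : Type*} [Fintype ι] [CommSemiring R] [AddCommMonoid M] [AddCommMonoid N]
  [Module R M] [Module R N]

/-- The pairing `(l₁, l₂) ↦ ∑ i, c i * (l₁ (b i) * l₂ (b' i))` of the duals of `M` and `N`, which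
has the diagonal Gram matrix `c` in the bases dual to `b` and `b'`. A form whose Gram matrix is a
permuted diagonal matrix is covered by reindexing `b'`. -/
noncomputable def weightedDualPairing (b : Basis ι R M) (b' : Basis ι R N) (c : ι → R) :
    Dual R M →ₗ[R] Dual R N →ₗ[R] R :=
  ∑ i, c i • (LinearMap.mul R R).compl₁₂ (Dual.eval R M (b i)) (Dual.eval R N (b' i))

variable (b : Basis ι R M) (b' : Basis ι R N) (c : ι → R)

theorem weightedDualPairing_apply (l₁ : Dual R M) (l₂ : Dual R N) :
    weightedDualPairing b b' c l₁ l₂ = ∑ i, c i * (l₁ (b i) * l₂ (b' i)) := by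
  simp [weightedDualPairing, LinearMap.sum_apply]

theorem weightedDualPairing_apply_coord (l : Dual R M) (i : ι) :
    weightedDualPairing b b' c l (b'.coord i) = c i * l (b i) := by
  classical
  simp [weightedDualPairing_apply, Finsupp.single_apply]

theorem flip_weightedDualPairing :
    (weightedDualPairing b b' c).flip = weightedDualPairing b' b c := by
  ext l₁ l₂
  simp only [LinearMap.flip_apply, weightedDualPairing_apply, mul_comm (l₁ _)]

variable {c}

theorem separatingLeft_weightedDualPairing (hc : ∀ i, c i ∈ nonZeroDivisors R) :
    (weightedDualPairing b b' c).SeparatingLeft := by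
  refine fun l hl ↦ b.ext fun i ↦ ?_
  have hi : c i * l (b i) = 0 := by rw [← weightedDualPairing_apply_coord b b' c, hl]
  rwa [mul_left_mem_nonZeroDivisors_eq_zero_iff (hc i)] at hi

theorem nondegenerate_weightedDualPairing (hc : ∀ i, c i ∈ nonZeroDivisors R) :
    (weightedDualPairing b b' c).Nondegenerate := by
  refine ⟨separatingLeft_weightedDualPairing b b' hc, ?_⟩
  rw [← LinearMap.flip_separatingLeft, flip_weightedDualPairing]
  exact separatingLeft_weightedDualPairing b' b hc

end WeightedDualPairing

section MonomialBasis

open Module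

variable {σ R : Type*} [CommSemiring R] {n : ℕ}

variable (σ R n) in
/-- The basis of the homogeneous polynomials of degree `n` given by the monomials of degree `n`,
indexed by their exponents. -/
noncomputable def homogeneousBasis :
    Basis {d : σ →₀ ℕ | d.degree = n} R (homogeneousSubmodule σ R n) :=
  (basisRestrictSupport R {d : σ →₀ ℕ | d.degree = n}).map
    (LinearEquiv.ofEq _ _ (homogeneousSubmodule_eq_finsupp_supported σ R n).symm)

theorem homogeneousBasis_repr_apply (p : homogeneousSubmodule σ R n)
    (d : {d : σ →₀ ℕ | d.degree = n}) :
    (homogeneousBasis σ R n).repr p d = coeff (d : σ →₀ ℕ) (p : MvPolynomial σ R) :=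
  rfl

theorem coe_homogeneousBasis_apply (d : {d : σ →₀ ℕ | d.degree = n}) :
    (homogeneousBasis σ R n d : MvPolynomial σ R) = monomial (d : σ →₀ ℕ) 1 := by
  classical
  have hd : (d : σ →₀ ℕ).degree = n := d.2
  have h : homogeneousBasis σ R n d = ⟨monomial d 1, isHomogeneous_monomial 1 hd⟩ := by
    rw [Basis.apply_eq_iff]
    ext e
    simp [homogeneousBasis_repr_apply, coeff_monomial, Finsupp.single_apply, Subtype.ext_iff]
  rw [h]

/-- The exponents of degree `k` in two variables, enumerated by the exponent `i` of the first
variable. -/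
noncomputable def finEquivDegreeEq (k : ℕ) :
    Fin (k + 1) ≃ {d : Fin 2 →₀ ℕ | d.degree = k} :=
  (Finset.Nat.antidiagonalEquivFin k).symm.trans <|
    (finTwoArrowEquiv' ℕ).symm.subtypeEquiv fun p ↦ by simp [Finsupp.degree_eq_sum]

variable (R) in
/-- The basis of `P_k` whose `i`-th element is `X^i Y^(k-i)`. -/
noncomputable def binaryMonomialBasis (k : ℕ) :
    Basis (Fin (k + 1)) R (homogeneousSubmodule (Fin 2) R k) :=
  (homogeneousBasis (Fin 2) R k).reindex (finEquivDegreeEq k).symm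

theorem binaryMonomialBasis_apply (F : Type*) [Field F] (k : ℕ) (i : Fin (k + 1)) :
    binaryMonomialBasis F k i = monBasisElt F k i := by
  apply Subtype.ext
  simp [binaryMonomialBasis, coe_homogeneousBasis_apply, monomial_fin_two, monBasisElt,
    finEquivDegreeEq]

end MonomialBasis

theorem deltaPairing_eq_weightedDualPairing (F : Type*) [Field F] (k : ℕ)
    (l₁ l₂ : Module.Dual F (homogeneousSubmodule (Fin 2) F k)) :
    deltaPairing F k l₁ l₂ =
      weightedDualPairing (binaryMonomialBasis F k)
        ((binaryMonomialBasis F k).reindex Fin.revPerm)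
        (fun i ↦ (-1) ^ (k - (i : ℕ)) * (k.choose i : F)) l₁ l₂ := by
  simp only [deltaPairing, weightedDualPairing_apply, Module.Basis.reindex_apply,
    binaryMonomialBasis_apply, Fin.revPerm_symm, Fin.revPerm_apply, Fin.rev, Nat.add_sub_add_right]

theorem deltaPairing_nondegenerate_general (F : Type*) [Field F] (k : ℕ)
    (hk : ∀ i ≤ k, (k.choose i : F) ≠ 0) :
    (∀ l₁ : Module.Dual F (homogeneousSubmodule (Fin 2) F k),
        (∀ l₂, deltaPairing F k l₁ l₂ = 0) → l₁ = 0) ∧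
    (∀ l₂ : Module.Dual F (homogeneousSubmodule (Fin 2) F k),
        (∀ l₁, deltaPairing F k l₁ l₂ = 0) → l₂ = 0) := by
  simp only [deltaPairing_eq_weightedDualPairing]
  refine nondegenerate_weightedDualPairing _ _ fun i ↦ mem_nonZeroDivisors_of_ne_zero ?_
  exact mul_ne_zero (pow_ne_zero _ (neg_ne_zero.2 one_ne_zero)) (hk i i.is_le)

/-- For a field `F` of characteristic zero, the pairing `⟨·,·⟩ₖ` on `V_k` is perfect
(nondegenerate on both sides). -/
theorem deltaPairing_nondegenerate (F : Type*) [Field F] [CharZero F] (k : ℕ) :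
    (∀ l₁ : Module.Dual F (homogeneousSubmodule (Fin 2) F k),
        (∀ l₂, deltaPairing F k l₁ l₂ = 0) → l₁ = 0) ∧
    (∀ l₂ : Module.Dual F (homogeneousSubmodule (Fin 2) F k),
        (∀ l₁, deltaPairing F k l₁ l₂ = 0) → l₂ = 0) :=
  deltaPairing_nondegenerate_general F k fun _ hi ↦ Nat.cast_ne_zero.2 (Nat.choose_pos hi).ne'
end
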